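/- arXiv:math/0111114 — 2 statements merged into one kernel-verified Lean document; each statement's English description precedes it below -/
import Mathlib

section
/- For any invertible matrix E ∈ GL(n,k), the algebra B(E) admits a Hopf algebra structure over k whose comultiplication Δ satisfies Δ(a_{ij}) = Σ_{k=1}^n a_{ik} ⊗ a_{kj} for all 1 ≤ i,j ≤ n, whose counit ε satisfies ε(a_{ij}) = δ_{ij}, and whose antipode S satisfies S(a_{ij}) = (E⁻¹·ᵀa·E)_{ij}, where a = (a_{ij}) is the matrix of generators. -/
open scoped TensorProduct
open Matrix

noncomputable section

variable (k : Type) [Field k]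

/-- The matrix of free generators of the free algebra on `Fin m × Fin n`. -/
def gens (m n : ℕ) : Matrix (Fin m) (Fin n) (FreeAlgebra k (Fin m × Fin n)) :=
  Matrix.of fun i j => FreeAlgebra.ι k (i, j)

/-- A scalar matrix viewed as a matrix over a `k`-algebra. -/
def liftMat {A : Type} [Semiring A] [Algebra k A] {p q : ℕ}
    (M : Matrix (Fin p) (Fin q) k) : Matrix (Fin p) (Fin q) A :=
  M.map (algebraMap k A)

/-- The defining relations of the algebra `B(E,F)`:
`F⁻¹ * ᵀz * E * z = 1` and `z * F⁻¹ * ᵀz * E = 1`. -/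
inductive BRel {m n : ℕ} (E : Matrix (Fin m) (Fin m) k) (F : Matrix (Fin n) (Fin n) k) :
    FreeAlgebra k (Fin m × Fin n) → FreeAlgebra k (Fin m × Fin n) → Prop
  | left (i j : Fin n) : BRel E F
      ((liftMat k (A := FreeAlgebra k (Fin m × Fin n)) F⁻¹ * (gens k m n)ᵀ * liftMat k (A := FreeAlgebra k (Fin m × Fin n)) E * gens k m n :
          Matrix (Fin n) (Fin n) (FreeAlgebra k (Fin m × Fin n))) i j)
      ((1 : Matrix (Fin n) (Fin n) (FreeAlgebra k (Fin m × Fin n))) i j)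
  | right (i j : Fin m) : BRel E F
      ((gens k m n * liftMat k (A := FreeAlgebra k (Fin m × Fin n)) F⁻¹ * (gens k m n)ᵀ * liftMat k E :
          Matrix (Fin m) (Fin m) (FreeAlgebra k (Fin m × Fin n))) i j)
      ((1 : Matrix (Fin m) (Fin m) (FreeAlgebra k (Fin m × Fin n))) i j)

/-- The algebra `B(E,F)`.  The Hopf algebra `B(E)` is `BB k E E`. -/
abbrev BB {m n : ℕ} (E : Matrix (Fin m) (Fin m) k) (F : Matrix (Fin n) (Fin n) k) :=
  RingQuot (BRel k E F)

/-- The matrix of generators of `B(E,F)`. -/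
def ZMat {m n : ℕ} (E : Matrix (Fin m) (Fin m) k) (F : Matrix (Fin n) (Fin n) k) :
    Matrix (Fin m) (Fin n) (BB k E F) :=
  Matrix.of fun i j => RingQuot.mkAlgHom k (BRel k E F) (gens k m n i j)

section helpers

variable {k}

theorem liftMat_mul' {A : Type} [Semiring A] [Algebra k A] {p q r : ℕ}
    (M : Matrix (Fin p) (Fin q) k) (N : Matrix (Fin q) (Fin r) k) :
    liftMat k (A := A) (M * N) = liftMat k (A := A) M * liftMat k (A := A) N := by
  ext i j; simp [liftMat, mul_apply]

theorem liftMat_one' {A : Type} [Semiring A] [Algebra k A] {p : ℕ} :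
    liftMat k (A := A) (1 : Matrix (Fin p) (Fin p) k) = 1 := by
  simp [liftMat]

theorem liftMat_map' {A B : Type} [Semiring A] [Algebra k A] [Semiring B] [Algebra k B]
    (f : A →ₐ[k] B) {p q : ℕ} (M : Matrix (Fin p) (Fin q) k) :
    (liftMat k (A := A) M).map f = liftMat k (A := B) M := by
  ext i j; simp [liftMat]

theorem liftMat_transpose' {A : Type} [Semiring A] [Algebra k A] {p q : ℕ}
    (M : Matrix (Fin p) (Fin q) k) :
    (liftMat k (A := A) M)ᵀ = liftMat k Mᵀ := rfl

/-- transpose of a product where the entries commute -/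
theorem transpose_mul_of_commute {A : Type} [Semiring A] {p q r : ℕ}
    (M : Matrix (Fin p) (Fin q) A) (N : Matrix (Fin q) (Fin r) A)
    (h : ∀ i j i' j', Commute (M i j) (N i' j')) : (M * N)ᵀ = Nᵀ * Mᵀ := by
  ext i j
  simp only [transpose_apply, mul_apply]
  exact Finset.sum_congr rfl fun l _ => h _ _ _ _

theorem transpose_liftMat_mul {A : Type} [Semiring A] [Algebra k A] {p q r : ℕ}
    (M : Matrix (Fin p) (Fin q) k) (N : Matrix (Fin q) (Fin r) A) :
    (liftMat k (A := A) M * N)ᵀ = Nᵀ * liftMat k (A := A) Mᵀ :=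
  transpose_mul_of_commute _ _ fun _ _ _ _ => Algebra.commutes _ _

theorem transpose_mul_liftMat {A : Type} [Semiring A] [Algebra k A] {p q r : ℕ}
    (N : Matrix (Fin p) (Fin q) A) (M : Matrix (Fin q) (Fin r) k) :
    (N * liftMat k (A := A) M)ᵀ = liftMat k (A := A) Mᵀ * Nᵀ :=
  transpose_mul_of_commute _ _ fun _ _ _ _ => (Algebra.commutes _ _).symm

/-- transpose into the opposite algebra -/
def opM {A : Type} {p q : ℕ} (M : Matrix (Fin p) (Fin q) A) : Matrix (Fin q) (Fin p) Aᵐᵒᵖ :=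
  Mᵀ.map MulOpposite.op

theorem opM_mul {A : Type} [Semiring A] {p q r : ℕ}
    (M : Matrix (Fin p) (Fin q) A) (N : Matrix (Fin q) (Fin r) A) :
    opM (M * N) = opM N * opM M := by
  ext i j
  simp [opM, mul_apply]

theorem opM_one {A : Type} [Semiring A] {p : ℕ} :
    opM (1 : Matrix (Fin p) (Fin p) A) = 1 := by
  ext i j
  by_cases h : i = j <;> simp [opM, one_apply, h]

theorem opM_liftMat {A : Type} [Semiring A] [Algebra k A] {p q : ℕ}
    (M : Matrix (Fin p) (Fin q) k) :
    opM (liftMat k (A := A) M) = liftMat k Mᵀ := rfl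

theorem opM_transpose {A : Type} {p q : ℕ} (M : Matrix (Fin p) (Fin q) A) :
    (opM M)ᵀ = opM Mᵀ := rfl

variable {n : ℕ} (E : Matrix (Fin n) (Fin n) k)

theorem map_gens_lift {A : Type} [Semiring A] [Algebra k A] (M : Matrix (Fin n) (Fin n) A) :
    (gens k n n).map (FreeAlgebra.lift k (fun p : Fin n × Fin n => M p.1 p.2)) = M := by
  ext i j; simp [gens]

theorem one_map_apply' {A B : Type} [Semiring A] [Algebra k A] [Semiring B] [Algebra k B]
    (f : A →ₐ[k] B) (i j : Fin n) : f ((1 : Matrix (Fin n) (Fin n) A) i j) =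
      (1 : Matrix (Fin n) (Fin n) B) i j := by
  by_cases h : i = j <;> simp [one_apply, h]

theorem map_mul' {A B : Type} [Semiring A] [Algebra k A] [Semiring B] [Algebra k B]
    (f : A →ₐ[k] B) (M N : Matrix (Fin n) (Fin n) A) :
    (M * N).map f = M.map f * N.map f := by
  ext i j; simp [mul_apply]

/-- universal property -/
def BBlift {A : Type} [Semiring A] [Algebra k A] (M : Matrix (Fin n) (Fin n) A)
    (h1 : liftMat k E⁻¹ * Mᵀ * liftMat k E * M = 1)
    (h2 : M * liftMat k E⁻¹ * Mᵀ * liftMat k E = 1) : BB k E E →ₐ[k] A :=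
  RingQuot.liftAlgHom k ⟨FreeAlgebra.lift k (fun p : Fin n × Fin n => M p.1 p.2), by
    intro x y h
    induction h with
    | left i j =>
      rw [one_map_apply', ← h1, ← Matrix.map_apply (f := FreeAlgebra.lift k _)]
      simp only [map_mul', liftMat_map', transpose_map, map_gens_lift]
    | right i j =>
      rw [one_map_apply', ← h2, ← Matrix.map_apply (f := FreeAlgebra.lift k _)]
      simp only [map_mul', liftMat_map', transpose_map, map_gens_lift]⟩

theorem BBlift_Z {A : Type} [Semiring A] [Algebra k A] (M : Matrix (Fin n) (Fin n) A)
    (h1 : liftMat k E⁻¹ * Mᵀ * liftMat k E * M = 1)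
    (h2 : M * liftMat k E⁻¹ * Mᵀ * liftMat k E = 1) (i j : Fin n) :
    BBlift E M h1 h2 (ZMat k E E i j) = M i j := by
  simp [BBlift, ZMat, gens]

theorem Z_left : liftMat k E⁻¹ * (ZMat k E E)ᵀ * liftMat k E * ZMat k E E = 1 := by
  have hz : ZMat k E E = (gens k n n).map (RingQuot.mkAlgHom k (BRel k E E)) := rfl
  ext i j
  have := RingQuot.mkAlgHom_rel k (BRel.left (E := E) (F := E) i j)
  rw [one_map_apply', ← Matrix.map_apply (f := RingQuot.mkAlgHom k _)] at this
  simp only [map_mul', liftMat_map', transpose_map, ← hz] at this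
  exact this

theorem Z_right : ZMat k E E * liftMat k E⁻¹ * (ZMat k E E)ᵀ * liftMat k E = 1 := by
  have hz : ZMat k E E = (gens k n n).map (RingQuot.mkAlgHom k (BRel k E E)) := rfl
  ext i j
  have := RingQuot.mkAlgHom_rel k (BRel.right (E := E) (F := E) i j)
  rw [one_map_apply', ← Matrix.map_apply (f := RingQuot.mkAlgHom k _)] at this
  simp only [map_mul', liftMat_map', transpose_map, ← hz] at this
  exact this

theorem BB_induction {P : BB k E E → Prop} (hc : ∀ c, P (algebraMap k _ c))
    (hZ : ∀ i j, P (ZMat k E E i j)) (hm : ∀ x y, P x → P y → P (x * y))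
    (ha : ∀ x y, P x → P y → P (x + y)) (x) : P x := by
  obtain ⟨x, rfl⟩ := RingQuot.mkAlgHom_surjective k (BRel k E E) x
  induction x using FreeAlgebra.induction with
  | grade0 r => simpa using hc r
  | grade1 p => exact hZ p.1 p.2
  | mul a b h1 h2 => rw [map_mul]; exact hm _ _ h1 h2
  | add a b h1 h2 => rw [map_add]; exact ha _ _ h1 h2

theorem BB_hom_ext {A : Type} [Semiring A] [Algebra k A] {f g : BB k E E →ₐ[k] A}
    (h : ∀ i j, f (ZMat k E E i j) = g (ZMat k E E i j)) : f = g := by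
  apply AlgHom.ext; intro x
  induction x using BB_induction with
  | hc c => simp
  | hZ i j => exact h i j
  | hm x y h1 h2 => simp [h1, h2]
  | ha x y h1 h2 => simp [h1, h2]

section
variable {A : Type} [Semiring A] [Algebra k A]

theorem lE (hE : IsUnit E.det) : liftMat k (A := A) E * liftMat k E⁻¹ = 1 := by
  rw [← liftMat_mul' (k := k) (A := A), mul_nonsing_inv _ hE, liftMat_one']

theorem lE' (hE : IsUnit E.det) : liftMat k (A := A) E⁻¹ * liftMat k E = 1 := by
  rw [← liftMat_mul' (k := k) (A := A), nonsing_inv_mul _ hE, liftMat_one']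

theorem lET (hE : IsUnit E.det) : liftMat k (A := A) Eᵀ * liftMat k E⁻¹ᵀ = 1 := by
  rw [← liftMat_mul' (k := k) (A := A), ← transpose_mul, nonsing_inv_mul _ hE, transpose_one, liftMat_one']

theorem lET' (hE : IsUnit E.det) : liftMat k (A := A) E⁻¹ᵀ * liftMat k Eᵀ = 1 := by
  rw [← liftMat_mul' (k := k) (A := A), ← transpose_mul, mul_nonsing_inv _ hE, transpose_one, liftMat_one']

theorem map_rel1 {B : Type} [Semiring B] [Algebra k B] (f : A →ₐ[k] B)
    {M : Matrix (Fin n) (Fin n) A} (h1 : liftMat k E⁻¹ * Mᵀ * liftMat k E * M = 1) :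
    liftMat k E⁻¹ * (M.map f)ᵀ * liftMat k E * M.map f = 1 := by
  have := congrArg (fun X => X.map f) h1
  simp only [map_mul', liftMat_map', transpose_map] at this
  rw [this]; ext i j; exact one_map_apply' f i j

theorem map_rel2 {B : Type} [Semiring B] [Algebra k B] (f : A →ₐ[k] B)
    {M : Matrix (Fin n) (Fin n) A} (h1 : M * liftMat k E⁻¹ * Mᵀ * liftMat k E = 1) :
    M.map f * liftMat k E⁻¹ * (M.map f)ᵀ * liftMat k E = 1 := by
  have := congrArg (fun X => X.map f) h1
  simp only [map_mul', liftMat_map', transpose_map] at this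
  rw [this]; ext i j; exact one_map_apply' f i j

theorem prod_rel1 (hE : IsUnit E.det) {X Y : Matrix (Fin n) (Fin n) A}
    (hc : ∀ i j i' j', Commute (X i j) (Y i' j'))
    (hX : liftMat k E⁻¹ * Xᵀ * liftMat k E * X = 1)
    (hY : liftMat k E⁻¹ * Yᵀ * liftMat k E * Y = 1) :
    liftMat k E⁻¹ * (X * Y)ᵀ * liftMat k E * (X * Y) = 1 := by
  rw [transpose_mul_of_commute _ _ hc]
  have : Xᵀ * liftMat k E * X = liftMat k E := by
    have h := congrArg (liftMat k E * ·) hX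
    simpa only [← mul_assoc, lE E hE, one_mul, mul_one] using h
  calc _ = liftMat k E⁻¹ * Yᵀ * (Xᵀ * liftMat k E * X) * Y := by simp only [mul_assoc]
    _ = 1 := by rw [this, hY]

theorem prod_rel2 (hE : IsUnit E.det) {X Y : Matrix (Fin n) (Fin n) A}
    (hc : ∀ i j i' j', Commute (X i j) (Y i' j'))
    (hX : X * liftMat k E⁻¹ * Xᵀ * liftMat k E = 1)
    (hY : Y * liftMat k E⁻¹ * Yᵀ * liftMat k E = 1) :
    (X * Y) * liftMat k E⁻¹ * (X * Y)ᵀ * liftMat k E = 1 := by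
  rw [transpose_mul_of_commute _ _ hc]
  have : Y * liftMat k E⁻¹ * Yᵀ = liftMat k E⁻¹ := by
    have h := congrArg (· * liftMat k E⁻¹) hY
    simpa only [mul_assoc, lE E hE, one_mul, mul_one] using h
  calc _ = X * (Y * liftMat k E⁻¹ * Yᵀ) * Xᵀ * liftMat k E := by simp only [mul_assoc]
    _ = 1 := by rw [this, hX]

/-- the transposed antipode matrix -/
def WT (Z : Matrix (Fin n) (Fin n) A) : Matrix (Fin n) (Fin n) A :=
  liftMat k Eᵀ * Z * liftMat k E⁻¹ᵀ

theorem WT_transpose (Z : Matrix (Fin n) (Fin n) A) :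
    (WT E Z)ᵀ = liftMat k E⁻¹ * Zᵀ * liftMat k E := by
  rw [WT, transpose_mul_liftMat (k := k), transpose_liftMat_mul (k := k), transpose_transpose, transpose_transpose,
    mul_assoc]

theorem op_rel1 (hE : IsUnit E.det) {Z : Matrix (Fin n) (Fin n) A}
    (h2 : Z * liftMat k E⁻¹ * Zᵀ * liftMat k E = 1) :
    liftMat k E⁻¹ * (opM (WT E Z))ᵀ * liftMat k E * opM (WT E Z) = 1 := by
  rw [opM_transpose]
  have e1 : liftMat k (A := Aᵐᵒᵖ) E⁻¹ = opM (liftMat k E⁻¹ᵀ) := rfl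
  have e2 : liftMat k (A := Aᵐᵒᵖ) E = opM (liftMat k Eᵀ) := rfl
  rw [e1, e2, ← opM_mul, ← opM_mul, ← opM_mul, WT_transpose, ← opM_one]
  congr 1
  calc _ = liftMat k Eᵀ * Z * (liftMat k E⁻¹ᵀ * liftMat k Eᵀ) * liftMat k E⁻¹ * Zᵀ *
          liftMat k E * liftMat k E⁻¹ᵀ := by simp only [WT, mul_assoc]
    _ = liftMat k Eᵀ * (Z * liftMat k E⁻¹ * Zᵀ * liftMat k E) * liftMat k E⁻¹ᵀ := by
      rw [lET' E hE]; simp only [mul_assoc, one_mul]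
    _ = 1 := by rw [h2, mul_one, lET E hE]

theorem op_rel2 (hE : IsUnit E.det) {Z : Matrix (Fin n) (Fin n) A}
    (h1 : liftMat k E⁻¹ * Zᵀ * liftMat k E * Z = 1) :
    opM (WT E Z) * liftMat k E⁻¹ * (opM (WT E Z))ᵀ * liftMat k E = 1 := by
  rw [opM_transpose]
  have e1 : liftMat k (A := Aᵐᵒᵖ) E⁻¹ = opM (liftMat k E⁻¹ᵀ) := rfl
  have e2 : liftMat k (A := Aᵐᵒᵖ) E = opM (liftMat k Eᵀ) := rfl
  rw [e1, e2, ← opM_mul, ← opM_mul, ← opM_mul, WT_transpose, ← opM_one]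
  congr 1
  calc _ = liftMat k Eᵀ * (liftMat k E⁻¹ * Zᵀ * liftMat k E * (liftMat k E⁻¹ᵀ * liftMat k Eᵀ) * Z)
        * liftMat k E⁻¹ᵀ := by simp only [WT, mul_assoc]
    _ = 1 := by rw [lET' E hE, mul_one, h1, mul_one, lET E hE]

end

/-- comultiplication -/
def BBcomul (hE : IsUnit E.det) : BB k E E →ₐ[k] (BB k E E ⊗[k] BB k E E) :=
  BBlift E ((ZMat k E E).map (Algebra.TensorProduct.includeLeft (R := k) (S := k)) *
      (ZMat k E E).map (Algebra.TensorProduct.includeRight (R := k)))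
    (prod_rel1 E hE (fun _ _ _ _ => by simp [Commute, SemiconjBy])
      (map_rel1 E _ (Z_left E)) (map_rel1 E _ (Z_left E)))
    (prod_rel2 E hE (fun _ _ _ _ => by simp [Commute, SemiconjBy])
      (map_rel2 E _ (Z_right E)) (map_rel2 E _ (Z_right E)))

theorem BBcomul_Z (hE : IsUnit E.det) (i j : Fin n) :
    BBcomul E hE (ZMat k E E i j) = ∑ l, ZMat k E E i l ⊗ₜ[k] ZMat k E E l j := by
  rw [BBcomul, BBlift_Z]
  simp [mul_apply]

/-- counit -/
def BBcounit (hE : IsUnit E.det) : BB k E E →ₐ[k] k :=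
  BBlift E 1 (by simp [lE' E hE]) (by simp [lE' E hE])

theorem BBcounit_Z (hE : IsUnit E.det) (i j : Fin n) :
    BBcounit E hE (ZMat k E E i j) = if i = j then 1 else 0 := by
  rw [BBcounit, BBlift_Z]; rfl

/-- antipode, into the opposite -/
def BBantiOp (hE : IsUnit E.det) : BB k E E →ₐ[k] (BB k E E)ᵐᵒᵖ :=
  BBlift E (opM (WT E (ZMat k E E))) (op_rel1 E hE (Z_right E)) (op_rel2 E hE (Z_left E))

/-- antipode -/
def BBanti (hE : IsUnit E.det) : BB k E E →ₗ[k] BB k E E :=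
  (MulOpposite.opLinearEquiv k).symm.toLinearMap ∘ₗ (BBantiOp E hE).toLinearMap

theorem BBanti_Z (hE : IsUnit E.det) (i j : Fin n) :
    BBanti E hE (ZMat k E E i j) = (liftMat k E⁻¹ * (ZMat k E E)ᵀ * liftMat k E :
          Matrix (Fin n) (Fin n) (BB k E E)) i j := by
  rw [← WT_transpose]
  simp [BBanti, BBantiOp, BBlift_Z, opM]

theorem BBanti_mul (hE : IsUnit E.det) (x y) :
    BBanti E hE (x * y) = BBanti E hE y * BBanti E hE x := by
  simp [BBanti]

theorem BBanti_algebraMap (hE : IsUnit E.det) (c) :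
    BBanti E hE (algebraMap k _ c) = algebraMap k _ c := by
  simp [BBanti]

theorem anti_r {A : Type} [Semiring A] [Algebra k A] (S : A →ₗ[k] A)
    (hS : ∀ x y, S (x * y) = S y * S x) (t u : A ⊗[k] A) (c : k)
    (h : LinearMap.mul' k A (LinearMap.rTensor A S t) = algebraMap k A c) :
    LinearMap.mul' k A (LinearMap.rTensor A S (t * u)) =
      algebraMap k A c * LinearMap.mul' k A (LinearMap.rTensor A S u) := by
  induction u using TensorProduct.induction_on with
  | zero => simp
  | add a b ha hb => simp only [mul_add, map_add, ha, hb]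
  | tmul a b =>
    have key : LinearMap.mul' k A (LinearMap.rTensor A S (t * (a ⊗ₜ b))) =
        S a * LinearMap.mul' k A (LinearMap.rTensor A S t) * b := by
      clear h
      induction t using TensorProduct.induction_on with
      | zero => simp
      | add a b ha hb => simp only [mul_add, add_mul, map_add, ha, hb]
      | tmul x y => simp [hS, mul_assoc]
    rw [key, h]
    simp only [LinearMap.rTensor_tmul, LinearMap.mul'_apply]
    rw [← Algebra.commutes, mul_assoc]

theorem anti_l {A : Type} [Semiring A] [Algebra k A] (S : A →ₗ[k] A)
    (hS : ∀ x y, S (x * y) = S y * S x) (t u : A ⊗[k] A) (c : k)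
    (h : LinearMap.mul' k A (LinearMap.lTensor A S u) = algebraMap k A c) :
    LinearMap.mul' k A (LinearMap.lTensor A S (t * u)) =
      LinearMap.mul' k A (LinearMap.lTensor A S t) * algebraMap k A c := by
  induction t using TensorProduct.induction_on with
  | zero => simp
  | add a b ha hb => simp only [add_mul, map_add, ha, hb]
  | tmul a b =>
    have key : LinearMap.mul' k A (LinearMap.lTensor A S ((a ⊗ₜ b) * u)) =
        a * LinearMap.mul' k A (LinearMap.lTensor A S u) * S b := by
      clear h
      induction u using TensorProduct.induction_on with
      | zero => simp
      | add a b ha hb => simp only [mul_add, add_mul, map_add, ha, hb]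
      | tmul x y => simp [hS, mul_assoc]
    rw [key, h]
    simp only [LinearMap.lTensor_tmul, LinearMap.mul'_apply]
    rw [mul_assoc, mul_assoc, Algebra.commutes]

end helpers

/-- For any invertible matrix `E ∈ GL(n,k)`, the algebra `B(E)`
admits a Hopf algebra structure with `Δ(a i j) = ∑ l, a i l ⊗ a l j`,
`ε(a i j) = δ i j` and `S(a i j) = (E⁻¹ * ᵀa * E) i j`. -/
theorem BB_hopfAlgebra_structure {n : ℕ} (E : Matrix (Fin n) (Fin n) k)
    (hE : IsUnit E.det) :
    ∃ (Δ : BB k E E →ₐ[k] (BB k E E ⊗[k] BB k E E))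
      (ε : BB k E E →ₐ[k] k) (S : BB k E E →ₗ[k] BB k E E),
      -- values on the generators
      (∀ i j, Δ (ZMat k E E i j) = ∑ l, ZMat k E E i l ⊗ₜ[k] ZMat k E E l j) ∧
      (∀ i j, ε (ZMat k E E i j) = if i = j then 1 else 0) ∧
      (∀ i j, S (ZMat k E E i j) =
        (liftMat k E⁻¹ * (ZMat k E E)ᵀ * liftMat k E :
          Matrix (Fin n) (Fin n) (BB k E E)) i j) ∧
      -- coassociativity
      (∀ x, (TensorProduct.assoc k (BB k E E) (BB k E E) (BB k E E))
            ((Algebra.TensorProduct.map Δ (AlgHom.id k (BB k E E))) (Δ x)) =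
          (Algebra.TensorProduct.map (AlgHom.id k (BB k E E)) Δ) (Δ x)) ∧
      -- counit axioms
      (∀ x, (TensorProduct.lid k (BB k E E))
            ((Algebra.TensorProduct.map ε (AlgHom.id k (BB k E E))) (Δ x)) = x) ∧
      (∀ x, (TensorProduct.rid k (BB k E E))
            ((Algebra.TensorProduct.map (AlgHom.id k (BB k E E)) ε) (Δ x)) = x) ∧
      -- antipode axioms
      (∀ x, (LinearMap.mul' k (BB k E E)) ((LinearMap.rTensor (BB k E E) S) (Δ x)) =
          algebraMap k (BB k E E) (ε x)) ∧
      (∀ x, (LinearMap.mul' k (BB k E E)) ((LinearMap.lTensor (BB k E E) S) (Δ x)) =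
          algebraMap k (BB k E E) (ε x)) := by
  refine ⟨BBcomul E hE, BBcounit E hE, BBanti E hE, BBcomul_Z E hE, BBcounit_Z E hE,
    BBanti_Z E hE, ?_, ?_, ?_, ?_, ?_⟩
  · have : ((Algebra.TensorProduct.assoc k k k (BB k E E) (BB k E E) (BB k E E)).toAlgHom.comp
        (Algebra.TensorProduct.map (BBcomul E hE) (AlgHom.id k _))).comp (BBcomul E hE) =
        (Algebra.TensorProduct.map (AlgHom.id k _) (BBcomul E hE)).comp (BBcomul E hE) := by
      apply BB_hom_ext
      intro i j
      simp [BBcomul_Z, TensorProduct.sum_tmul, TensorProduct.tmul_sum]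
      exact Finset.sum_comm
    exact fun x => DFunLike.congr_fun this x
  · have : ((Algebra.TensorProduct.lid k (BB k E E)).toAlgHom.comp
        (Algebra.TensorProduct.map (BBcounit E hE) (AlgHom.id k _))).comp (BBcomul E hE) =
        AlgHom.id k _ := by
      apply BB_hom_ext
      intro i j
      simp [BBcomul_Z, BBcounit_Z]
    exact fun x => DFunLike.congr_fun this x
  · have : ((Algebra.TensorProduct.rid k k (BB k E E)).toAlgHom.comp
        (Algebra.TensorProduct.map (AlgHom.id k _) (BBcounit E hE))).comp (BBcomul E hE) =
        AlgHom.id k _ := by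
      apply BB_hom_ext
      intro i j
      simp [BBcomul_Z, BBcounit_Z]
    exact fun x => DFunLike.congr_fun this x
  · intro x
    induction x using BB_induction with
    | hc c =>
      rw [AlgHom.commutes, AlgHom.commutes, Algebra.TensorProduct.algebraMap_apply]
      simp [BBanti_algebraMap]
    | hZ i j =>
      rw [BBcomul_Z, BBcounit_Z]
      simp only [map_sum, LinearMap.rTensor_tmul, LinearMap.mul'_apply, BBanti_Z]
      rw [← mul_apply, Z_left, one_apply]
      split_ifs <;> simp
    | hm x y h1 h2 =>
      rw [map_mul, anti_r _ (BBanti_mul E hE) _ _ _ h1, h2, map_mul, map_mul]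
    | ha x y h1 h2 => simp only [map_add, h1, h2]
  · intro x
    induction x using BB_induction with
    | hc c =>
      rw [AlgHom.commutes, AlgHom.commutes, Algebra.TensorProduct.algebraMap_apply]
      have := BBanti_algebraMap E hE 1
      rw [map_one] at this
      simp [this]
    | hZ i j =>
      rw [BBcomul_Z, BBcounit_Z]
      simp only [map_sum, LinearMap.lTensor_tmul, LinearMap.mul'_apply, BBanti_Z]
      rw [← mul_apply, ← mul_assoc, ← mul_assoc, Z_right, one_apply]
      split_ifs <;> simp
    | hm x y h1 h2 =>
      rw [map_mul, anti_l _ (BBanti_mul E hE) _ _ _ h2, h1, map_mul, map_mul]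
    | ha x y h1 h2 => simp only [map_add, h1, h2]
end
end

section
/- Let k be an algebraically closed field, let n ≥ 2, and let M ∈ GL(n,k). Then there exists P ∈ GL(n,k) such that (ᵀP·M·P)_{nn} = 0, i.e. the (n,n) entry of ᵀP·M·P vanishes. -/
open Matrix

/-- **Statement 10.** Over an algebraically closed field, any invertible `n × n`
matrix (`n ≥ 2`) is congruent to a matrix whose last diagonal entry vanishes. -/
theorem exists_congruent_last_entry_zero (k : Type) [Field k] [IsAlgClosed k]
    {n : ℕ} (hn : 2 ≤ n) (M : Matrix (Fin n) (Fin n) k) (hM : IsUnit M.det) :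
    ∃ P : Matrix (Fin n) (Fin n) k, IsUnit P.det ∧
      (Pᵀ * M * P) ⟨n - 1, by omega⟩ ⟨n - 1, by omega⟩ = 0 := by
  have hil : (⟨0, by omega⟩ : Fin n) ≠ ⟨n - 1, by omega⟩ := by
    intro h
    have := congrArg Fin.val h
    simp only at this
    omega
  generalize (⟨n - 1, by omega⟩ : Fin n) = l at hil ⊢
  generalize (⟨0, by omega⟩ : Fin n) = i at hil
  by_cases ha : M i i = 0
  · refine ⟨(1 : Matrix (Fin n) (Fin n) k).submatrix id (Equiv.swap i l), ?_, ?_⟩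
    · rw [Matrix.det_permute']
      simp only [Matrix.det_one, mul_one]
      exact (Units.isUnit _).map (Int.castRingHom k)
    · simp [Matrix.mul_apply, Matrix.one_apply, ha]
  · obtain ⟨t, ht⟩ := IsAlgClosed.exists_root
      (Polynomial.C (M i i) * Polynomial.X ^ 2 + Polynomial.C (M i l + M l i) * Polynomial.X
        + Polynomial.C (M l l)) (by rw [Polynomial.degree_quadratic ha]; decide)
    simp only [Polynomial.IsRoot.def, Polynomial.eval_add, Polynomial.eval_mul,
      Polynomial.eval_C, Polynomial.eval_pow, Polynomial.eval_X] at ht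
    refine ⟨Matrix.transvection i l t, ?_, ?_⟩
    · rw [Matrix.det_transvection_of_ne i l hil]
      exact isUnit_one
    · simp only [Matrix.transvection, Matrix.transpose_add, Matrix.transpose_one,
        Matrix.transpose_single, Matrix.mul_add, Matrix.add_mul, Matrix.one_mul, Matrix.mul_one,
        Matrix.add_apply, Matrix.single_mul_apply_same, Matrix.mul_single_apply_same]
      linear_combination ht
end
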